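/- Let n be a positive integer which is not a square, let u, v ∈ ℚ with v ≠ 0 and u² − n·v² = 1, and let d be an odd positive integer. Define a, b ∈ ℚ by a + b·√n = (u + v·√n)^d. Then the polynomials P = T_d(X + u), Q = v·U_{d−1}(X + u), and D = v⁻²·X² + 2·u·v⁻²·X + n in ℚ[X] satisfy P² − D·Q² = 1, deg(P) = d, deg(D) = 2, P(0) = a, Q(0) = b, and D(0) = n. -/

import Mathlib

/-!
With `w² = x² - 1` one has the Chebyshev form of de Moivre's formula,
`(x + w)^k = T_k(x) + U_{k-1}(x) * w` (`pow_eq_T_add_U`), and the polynomial Pell equation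
`T_k² - (X² - 1) * U_{k-1}² = 1` (`pell_T_U`). Both follow by induction from the recurrence
describing multiplication by `x + w`.

Since `u² - n v² = 1`, we have `v² * D = (X + u)² - 1`, so composing the Pell equation with `X + u`
gives `P² - D * Q² = 1`. Taking `x = u` and `w = v√n` in de Moivre's formula gives
`(u + v√n)^d = P(0) + Q(0)√n`, and the irrationality of `√n` lets one compare coefficients.
-/

open Polynomial Polynomial.Chebyshev

theorem T_succ_eq (R : Type*) [CommRing R] (k : ℤ) :
    Chebyshev.T R (k + 1) =
      X * Chebyshev.T R k + (X ^ 2 - 1) * Chebyshev.U R (k - 1) := by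
  have h := T_eq_X_mul_T_sub_pol_U R (k - 1)
  rw [show k - 1 + 2 = k + 1 by ring, show k - 1 + 1 = k by ring] at h
  rw [h]
  ring

/-- The companion of `T_succ_eq`: together they say that multiplying `T_k + U_{k-1} * w` by `X + w`,
where `w² = X² - 1`, gives `T_{k+1} + U_k * w`. -/
theorem U_succ_eq (R : Type*) [CommRing R] (k : ℤ) :
    Chebyshev.U R k = X * Chebyshev.U R (k - 1) + Chebyshev.T R k := by
  have h := U_eq_X_mul_U_add_T R (k - 1)
  rwa [sub_add_cancel] at h

theorem pell_T_U (R : Type*) [CommRing R] (k : ℕ) :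
    Chebyshev.T R k ^ 2 - (X ^ 2 - 1) * Chebyshev.U R ((k : ℤ) - 1) ^ 2 = 1 := by
  induction k with
  | zero => simp
  | succ k ih =>
    push_cast
    rw [add_sub_cancel_right, T_succ_eq, U_succ_eq R (k : ℤ)]
    linear_combination ih

/-- De Moivre's formula for Chebyshev polynomials: `w` plays the role of `i sin θ` when
`x = cos θ`. -/
theorem pow_eq_T_add_U {R : Type*} [CommRing R] (x w : R) (hw : w ^ 2 = x ^ 2 - 1) (k : ℕ) :
    (x + w) ^ k = (Chebyshev.T R k).eval x + (Chebyshev.U R ((k : ℤ) - 1)).eval x * w := by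
  induction k with
  | zero => simp
  | succ k ih =>
    push_cast
    rw [pow_succ, ih, add_sub_cancel_right, T_succ_eq, U_succ_eq R (k : ℤ)]
    simp only [eval_add, eval_mul, eval_sub, eval_pow, eval_X, eval_one]
    linear_combination (Chebyshev.U R ((k : ℤ) - 1)).eval x * hw

theorem rat_add_mul_irrational_inj {s : ℝ} (hs : Irrational s) {a b a' b' : ℚ}
    (h : (a : ℝ) + b * s = a' + b' * s) : a = a' ∧ b = b' := by
  have hb : b = b' := by
    by_contra hne
    have hne' : (b : ℝ) - b' ≠ 0 := sub_ne_zero.mpr (by exact_mod_cast hne)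
    refine hs ⟨(a' - a) / (b - b'), ?_⟩
    push_cast
    rw [div_eq_iff hne']
    linear_combination -h
  subst hb
  exact ⟨by exact_mod_cast add_right_cancel h, rfl⟩

theorem stmt_13 (n : ℕ) (hn : 0 < n) (hns : ¬ IsSquare n)
    (u v : ℚ) (hv : v ≠ 0) (huv : u ^ 2 - (n : ℚ) * v ^ 2 = 1)
    (d : ℕ) (hd : 0 < d) (hodd : Odd d)
    (a b : ℚ)
    (hab : ((u : ℝ) + (v : ℝ) * Real.sqrt n) ^ d = (a : ℝ) + (b : ℝ) * Real.sqrt n)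
    (P Q D : ℚ[X])
    (hPdef : P = (Chebyshev.T ℚ d).comp (X + C u))
    (hQdef : Q = C v * (Chebyshev.U ℚ ((d : ℤ) - 1)).comp (X + C u))
    (hDdef : D = C (v⁻¹ ^ 2) * X ^ 2 + C (2 * u * v⁻¹ ^ 2) * X + C (n : ℚ)) :
    P ^ 2 - D * Q ^ 2 = 1 ∧ P.natDegree = d ∧ D.natDegree = 2 ∧
      P.eval 0 = a ∧ Q.eval 0 = b ∧ D.eval 0 = (n : ℚ) := by
  have hv2 : v⁻¹ ^ 2 * v ^ 2 = 1 := by field_simp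
  have hC : (Polynomial.C (v⁻¹ ^ 2) : ℚ[X]) * Polynomial.C v ^ 2 = 1 := by
    rw [← Polynomial.C_pow, ← Polynomial.C_mul, hv2, Polynomial.C_1]
  have hCuv : (Polynomial.C u : ℚ[X]) ^ 2 - Polynomial.C (n : ℚ) * Polynomial.C v ^ 2 = 1 := by
    rw [← Polynomial.C_pow, ← Polynomial.C_pow, ← Polynomial.C_mul, ← Polynomial.C_sub, huv,
      Polynomial.C_1]
  have hDv : D * Polynomial.C v ^ 2 = (X + Polynomial.C u) ^ 2 - 1 := by
    have h2 : (Polynomial.C (2 * u * v⁻¹ ^ 2) : ℚ[X]) =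
        2 * Polynomial.C u * Polynomial.C (v⁻¹ ^ 2) := by
      rw [Polynomial.C_mul, Polynomial.C_mul]; rfl
    rw [hDdef, h2]
    linear_combination (X ^ 2 + 2 * Polynomial.C u * X) * hC - hCuv
  have hpell := congrArg (fun p : ℚ[X] => p.comp (X + Polynomial.C u)) (pell_T_U ℚ d)
  simp only [sub_comp, mul_comp, pow_comp, X_comp, one_comp] at hpell
  have hirr : Irrational (Real.sqrt n) := irrational_sqrt_natCast_iff.mpr hns
  have hw : ((v : ℝ) * Real.sqrt n) ^ 2 = (u : ℝ) ^ 2 - 1 := by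
    have h : (u : ℝ) ^ 2 - n * (v : ℝ) ^ 2 = 1 := by exact_mod_cast huv
    rw [mul_pow, Real.sq_sqrt (Nat.cast_nonneg n)]
    linear_combination -h
  have hT : (Chebyshev.T ℝ d).eval (u : ℝ) = (((Chebyshev.T ℚ d).eval u : ℚ) : ℝ) := by
    simpa using (algebraMap_eval_T (R' := ℝ) u d).symm
  have hU : (Chebyshev.U ℝ ((d : ℤ) - 1)).eval (u : ℝ) =
      (((Chebyshev.U ℚ ((d : ℤ) - 1)).eval u : ℚ) : ℝ) := by
    simpa using (algebraMap_eval_U (R' := ℝ) u ((d : ℤ) - 1)).symm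
  have hmoivre := pow_eq_T_add_U (u : ℝ) ((v : ℝ) * Real.sqrt n) hw d
  rw [hab, hT, hU] at hmoivre
  obtain ⟨ha, hb⟩ := rat_add_mul_irrational_inj hirr
    (a' := (Chebyshev.T ℚ d).eval u) (b' := v * (Chebyshev.U ℚ ((d : ℤ) - 1)).eval u)
    (by rw [hmoivre]; push_cast; ring)
  refine ⟨?_, ?_, ?_, ?_, ?_, ?_⟩
  · rw [hPdef, hQdef]
    linear_combination hpell -
      (Chebyshev.U ℚ ((d : ℤ) - 1)).comp (X + Polynomial.C u) ^ 2 * hDv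
  · rw [hPdef, natDegree_comp, natDegree_X_add_C, natDegree_T]
    simp
  · rw [hDdef]
    exact natDegree_quadratic (pow_ne_zero 2 (inv_ne_zero hv))
  · rw [hPdef, ha]
    simp [eval_comp]
  · rw [hQdef, hb]
    simp [eval_comp]
  · simp [hDdef]
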